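/- For every real d ≥ 2 and K ≥ 1 there is a constant C = C(d, K) > 0 such that for all m, N ∈ ℕ with N ≥ 2 there exists an online factorization algorithm in the row arrival model (whose functions may depend on m, N, d, K) with the following guarantee: for every m×N matrix Q with entries in {0,1} whose shatter function satisfies π_Q(s) ≤ K·s^d for all integers 1 ≤ s ≤ N, when the algorithm is run on the rows q_1,…,q_m of Q it outputs matrices R_t and row vectors ℓ_t with ℓ_t·R_t = q_t, ‖R_t‖_{1→2} ≤ 1 for every t ∈ {1,…,m}, and max_{t∈{1,…,m}} ‖ℓ_t‖_2 ≤ C·min{ m^{(1−1/d)/2}·(log₂(4N))³ , N^{(1−1/d)/2}·(log₂(4N))^{1/d} }. -/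

import Mathlib

open Matrix

open Classical in
/-- The shatter function of a 0/1 matrix `Q`: `shatterFn Q s` is the maximum, over all
sets `S` of `s` columns, of the number of distinct rows of the submatrix `Q_S`. -/
noncomputable def shatterFn {m N : ℕ} (Q : Matrix (Fin m) (Fin N) ℝ) (s : ℕ) : ℕ :=
  Finset.sup (Finset.univ.filter fun S : Finset (Fin N) => S.card = s)
    (fun S => (Finset.image (fun i : Fin m => fun j : {x // x ∈ S} => Q i j)
      Finset.univ).card)


theorem hc_edge (s : ℕ) : ∀ (D : ℝ) (w : (Fin s → Bool) → ℝ), (∀ u, 0 ≤ w u) →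
    (∀ T : Finset (Fin s), (∀ g : Fin s → Bool, ∃ u, 0 < w u ∧ ∀ i ∈ T, u i = g i) →
      (T.card : ℝ) ≤ D) →
    ∑ i, ∑ u : Fin s → Bool, min (w u) (w (Function.update u i (!u i))) ≤ 2 * D * ∑ u, w u := by
  induction s with
  | zero =>
    intro D w hw hT
    simp only [Finset.univ_eq_empty, Finset.sum_empty]
    by_cases h : ∃ u, 0 < w u
    · obtain ⟨u, hu⟩ := h
      have := hT ∅ (fun g => ⟨u, hu, by simp⟩)
      simp only [Finset.card_empty, Nat.cast_zero] at this
      have h2 : 0 ≤ ∑ u, w u := Finset.sum_nonneg (fun u _ => hw u)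
      positivity
    · push Not at h
      have : ∑ u, w u = 0 := Finset.sum_eq_zero (fun u _ => le_antisymm (h u) (hw u))
      rw [this]; simp
  | succ s ih =>
    intro D w hw hT
    have hsum : ∀ F : (Fin (s+1) → Bool) → ℝ, ∑ u, F u =
        ∑ v : Fin s → Bool, (F (Fin.cons true v) + F (Fin.cons false v)) := by
      intro F
      rw [← (Fin.consEquiv (fun _ : Fin (s+1) => Bool)).sum_comp, Fintype.sum_prod_type]
      simp [Finset.sum_add_distrib, Fin.consEquiv]
    set w1 : (Fin s → Bool) → ℝ := fun v => max (w (Fin.cons true v)) (w (Fin.cons false v)) with hw1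
    set w2 : (Fin s → Bool) → ℝ := fun v => min (w (Fin.cons true v)) (w (Fin.cons false v)) with hw2
    have h1 := ih D w1 (fun u => le_max_of_le_left (hw _)) (by
      intro T h
      have := hT (T.map (Fin.succEmb s)) (by
        intro g
        obtain ⟨u, hu, hug⟩ := h (fun i => g i.succ)
        rcases lt_max_iff.1 hu with hu | hu
        · exact ⟨_, hu, by simpa using hug⟩
        · exact ⟨_, hu, by simpa using hug⟩)
      simpa using this)
    have h2 := ih (D - 1) w2 (fun u => le_min (hw _) (hw _)) (by
      intro T h
      have := hT (Finset.cons 0 (T.map (Fin.succEmb s)) (by simp [Fin.succ_ne_zero])) (by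
        intro g
        obtain ⟨u, hu, hug⟩ := h (fun i => g i.succ)
        have hu' := lt_min_iff.1 hu
        refine ⟨Fin.cons (g 0) u, ?_, by simpa using hug⟩
        cases g 0
        · exact hu'.2
        · exact hu'.1)
      simp at this
      linarith)
    have hW : ∑ u, w u = ∑ v, w1 v + ∑ v, w2 v := by
      rw [hsum, ← Finset.sum_add_distrib]
      exact Finset.sum_congr rfl (fun v _ => (max_add_min _ _).symm)
    rw [Fin.sum_univ_succ]
    have h0 : ∑ u : Fin (s+1) → Bool, min (w u) (w (Function.update u 0 (!u 0))) = 2 * ∑ v, w2 v := by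
      rw [hsum, Finset.mul_sum]
      refine Finset.sum_congr rfl (fun v _ => ?_)
      simp only [Fin.cons_zero, Fin.update_cons_zero, Bool.not_true, Bool.not_false, hw2]
      rw [min_comm (w (Fin.cons false v))]; ring
    have h3 : ∀ i : Fin s, ∑ u : Fin (s+1) → Bool, min (w u) (w (Function.update u i.succ (!u i.succ)))
        ≤ ∑ v, min (w1 v) (w1 (Function.update v i (!v i))) +
          ∑ v, min (w2 v) (w2 (Function.update v i (!v i))) := by
      intro i
      rw [hsum, ← Finset.sum_add_distrib]
      refine Finset.sum_le_sum (fun v _ => ?_)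
      simp only [Fin.cons_succ, ← Fin.cons_update, hw1, hw2]
      generalize w (Fin.cons true v) = a
      generalize w (Fin.cons false v) = b
      generalize w (Fin.cons true (Function.update v i (!v i))) = c
      generalize w (Fin.cons false (Function.update v i (!v i))) = e
      grind
    have h4 := Finset.sum_le_sum (fun i (_ : i ∈ Finset.univ) => h3 i)
    rw [Finset.sum_add_distrib] at h4
    rw [h0, hW]
    nlinarith

theorem class_bound {ι X : Type*} [Fintype X] [DecidableEq ι] (f : ι → X → Bool) (μ : X → ℝ)
    (hμ : ∀ a, 0 ≤ μ a) (ρ : ℝ) (C : Finset ι)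
    (hsep : ∀ p ∈ C, ∀ q ∈ C, p ≠ q → ρ ≤ ∑ a, if f p a ≠ f q a then μ a else 0) :
    ρ * ((C.card : ℝ) - if C.Nonempty then 1 else 0) ≤
      ∑ a, μ a * (2 * min ((C.filter (fun p => f p a = true)).card : ℝ)
        ((C.filter (fun p => f p a = false)).card : ℝ)) := by
  rcases C.eq_empty_or_nonempty with rfl | hne
  · simp
  rw [if_pos hne]
  have hc : (0:ℝ) < C.card := by exact_mod_cast hne.card_pos
  have key : ∀ a, (∑ p ∈ C, ∑ q ∈ C, if f p a ≠ f q a then (1:ℝ) else 0) ≤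
      C.card * (2 * min ((C.filter (fun p => f p a = true)).card : ℝ)
        ((C.filter (fun p => f p a = false)).card : ℝ)) := by
    intro a
    set n1 := (C.filter (fun p => f p a = true)).card with hn1
    set n0 := (C.filter (fun p => f p a = false)).card with hn0
    have hs : C.card = n1 + n0 := by
      rw [← Finset.card_filter_add_card_filter_not (s := C) (fun p => f p a = true)]
      simp [hn1, hn0]
    have e1 : ∀ p ∈ C, (∑ q ∈ C, if f p a ≠ f q a then (1:ℝ) else 0) =
        if f p a = true then (n0:ℝ) else n1 := by
      intro p _
      rw [Finset.sum_boole]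
      cases h : f p a
      · simp only [Bool.false_eq_true, if_false, hn1]
        refine congrArg _ (congrArg _ (Finset.filter_congr (fun q _ => ?_)))
        cases f q a <;> simp
      · simp only [if_true, hn0]
        refine congrArg _ (congrArg _ (Finset.filter_congr (fun q _ => ?_)))
        cases f q a <;> simp
    rw [Finset.sum_congr rfl e1, Finset.sum_ite]
    simp only [Finset.sum_const, nsmul_eq_mul, Bool.not_eq_true]
    rw [← hn1, ← hn0, hs]
    push_cast
    have a1 : (0:ℝ) ≤ n1 := by positivity
    have a0 : (0:ℝ) ≤ n0 := by positivity
    rcases le_total (n1:ℝ) n0 with h | h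
    · rw [min_eq_left h]; nlinarith
    · rw [min_eq_right h]; nlinarith
  have k2 : ρ * (C.card * ((C.card:ℝ) - 1)) ≤ ∑ a, μ a * (∑ p ∈ C, ∑ q ∈ C, if f p a ≠ f q a then (1:ℝ) else 0) := by
    have : ∑ a, μ a * (∑ p ∈ C, ∑ q ∈ C, if f p a ≠ f q a then (1:ℝ) else 0) =
        ∑ p ∈ C, ∑ q ∈ C, ∑ a, if f p a ≠ f q a then μ a else 0 := by
      simp_rw [Finset.mul_sum]
      rw [Finset.sum_comm]
      refine Finset.sum_congr rfl (fun p _ => ?_)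
      rw [Finset.sum_comm]
      refine Finset.sum_congr rfl (fun q _ => ?_)
      refine Finset.sum_congr rfl (fun a _ => ?_)
      split_ifs <;> simp
    rw [this]
    have : ∀ p ∈ C, ρ * ((C.card:ℝ) - 1) ≤ ∑ q ∈ C, ∑ a, if f p a ≠ f q a then μ a else 0 := by
      intro p hp
      rw [← Finset.add_sum_erase _ _ hp]
      have h1 : (C.erase p).card • ρ ≤ ∑ q ∈ C.erase p, ∑ a, if f p a ≠ f q a then μ a else 0 :=
        Finset.card_nsmul_le_sum _ _ _ (fun q hq => hsep p hp q (Finset.mem_of_mem_erase hq)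
          (Finset.ne_of_mem_erase hq).symm)
      rw [Finset.card_erase_of_mem hp, nsmul_eq_mul, Nat.cast_sub hne.card_pos] at h1
      simp at h1 ⊢
      linarith
    have := Finset.card_nsmul_le_sum _ _ _ this
    rw [nsmul_eq_mul] at this
    linarith
  have k3 := k2.trans (Finset.sum_le_sum (fun a _ => mul_le_mul_of_nonneg_left (key a) (hμ a)))
  have k4 : C.card * (ρ * ((C.card:ℝ) - 1)) ≤ C.card * ∑ a, μ a * (2 * min ((C.filter (fun p => f p a = true)).card : ℝ)
        ((C.filter (fun p => f p a = false)).card : ℝ)) := by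
    rw [Finset.mul_sum]
    calc _ = ρ * (C.card * ((C.card:ℝ) - 1)) := by ring
      _ ≤ _ := k3
      _ = _ := Finset.sum_congr rfl (fun a _ => by ring)
  exact le_of_mul_le_mul_left k4 hc

theorem packing_abs {ι X : Type*} [Fintype X] [DecidableEq ι] (f : ι → X → Bool) (μ : X → ℝ)
    (hμ : ∀ a, 0 ≤ μ a) (hμ1 : ∑ a, μ a = 1) (ρ : ℝ) (hρ : 0 ≤ ρ) (P : Finset ι)
    (hsep : ∀ p ∈ P, ∀ q ∈ P, p ≠ q → ρ ≤ ∑ a, if f p a ≠ f q a then μ a else 0)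
    (r : ℕ) (M D : ℝ)
    (H1 : ∀ x : Fin r → X, ((P.image (fun p => fun i => f p (x i))).card : ℝ) ≤ M)
    (H2 : ∀ x : Fin (r+1) → X, ∀ T : Finset (Fin (r+1)),
      (∀ g : Fin (r+1) → Bool, ∃ p ∈ P, ∀ i ∈ T, f p (x i) = g i) → (T.card : ℝ) ≤ D) :
    (r + 1) * (ρ * (P.card - M)) ≤ 2 * D * P.card := by
  classical
  set w : (Fin (r+1) → X) → (Fin (r+1) → Bool) → ℝ :=
    fun x u => ((P.filter (fun p => (fun i => f p (x i)) = u)).card : ℝ) with hwdef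
  have hwsum : ∀ x, ∑ u, w x u = P.card := by
    intro x
    have := Finset.card_eq_sum_card_fiberwise (s := P) (t := Finset.univ)
      (f := fun p => (fun i => f p (x i))) (fun _ _ => Finset.mem_coe.2 (Finset.mem_univ _))
    rw [this]; push_cast; rfl
  have hE : ∀ x, ∑ i, ∑ u, min (w x u) (w x (Function.update u i (!u i))) ≤ 2 * D * P.card := by
    intro x
    rw [← hwsum x]
    refine hc_edge (r+1) D (w x) (fun u => by positivity) (fun T hT => H2 x T (fun g => ?_))
    obtain ⟨u, hu, hug⟩ := hT g
    have : 0 < (P.filter (fun p => (fun i => f p (x i)) = u)).card := by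
      simp only [hwdef] at hu
      exact_mod_cast hu
    obtain ⟨p, hp⟩ := Finset.card_pos.1 this
    rw [Finset.mem_filter] at hp
    refine ⟨p, hp.1, fun i hi => ?_⟩
    rw [← hug i hi, ← hp.2]
  have hprod1 : ∀ n : ℕ, ∑ x : Fin n → X, ∏ j, μ (x j) = 1 := by
    intro n
    rw [← Fintype.sum_pow, hμ1, one_pow]
  have hup : ∑ x : Fin (r+1) → X, (∏ j, μ (x j)) *
      ∑ i, ∑ u, min (w x u) (w x (Function.update u i (!u i))) ≤ 2 * D * P.card := by
    calc _ ≤ ∑ x : Fin (r+1) → X, (∏ j, μ (x j)) * (2 * D * P.card) :=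
          Finset.sum_le_sum (fun x _ => mul_le_mul_of_nonneg_left (hE x)
            (Finset.prod_nonneg (fun _ _ => hμ _)))
      _ = _ := by rw [← Finset.sum_mul, hprod1, one_mul]
  refine le_trans ?_ hup
  have hlow : ∀ i : Fin (r+1), ρ * (P.card - M) ≤ ∑ x : Fin (r+1) → X, (∏ j, μ (x j)) *
      ∑ u, min (w x u) (w x (Function.update u i (!u i))) := by
    intro i
    rw [← (Fin.insertNthEquiv (fun _ : Fin (r+1) => X) i).sum_comp, Fintype.sum_prod_type,
      Finset.sum_comm]
    have hy : ∀ y : Fin r → X, ρ * (P.card - M) ≤ ∑ a, μ a *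
        ∑ u, min (w (i.insertNth a y) u) (w (i.insertNth a y) (Function.update u i (!u i))) := by
      intro y
      set C : (Fin r → Bool) → Finset ι := fun v => P.filter (fun p => (fun j => f p (y j)) = v) with hC
      have hu : ∀ a, ∑ u, min (w (i.insertNth a y) u) (w (i.insertNth a y) (Function.update u i (!u i)))
          = ∑ v, 2 * min (((C v).filter (fun p => f p a = true)).card : ℝ)
              (((C v).filter (fun p => f p a = false)).card : ℝ) := by
        intro a
        have hwC : ∀ b v, w (i.insertNth a y) (i.insertNth b v) =
            (((C v).filter (fun p => f p a = b)).card : ℝ) := by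
          intro b v
          simp only [hwdef, hC, Finset.filter_filter]
          congr 2
          ext p
          simp only [Finset.mem_filter]
          have : ((fun j => f p ((i.insertNth a y : Fin (r+1) → X) j)) = (i.insertNth b v : Fin (r+1) → Bool)) ↔
            ((fun j => f p (y j)) = v ∧ f p a = b) := by
            rw [Fin.eq_insertNth_iff]
            simp only [Fin.insertNth_apply_same]
            constructor
            · rintro ⟨h1, h2⟩
              refine ⟨?_, h1⟩
              rw [← h2]; funext j; simp [Fin.removeNth]
            · rintro ⟨h1, h2⟩
              refine ⟨h2, ?_⟩
              rw [← h1]; funext j; simp [Fin.removeNth]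
          rw [this]
        rw [← (Fin.insertNthEquiv (fun _ : Fin (r+1) => Bool) i).sum_comp, Fintype.sum_prod_type,
          Finset.sum_comm]
        refine Finset.sum_congr rfl (fun v _ => ?_)
        have hI : ∀ p : Bool × (Fin r → Bool), (Fin.insertNthEquiv (fun _ : Fin (r+1) => Bool) i) p =
          i.insertNth p.1 p.2 := fun _ => rfl
        simp only [hI, Fin.insertNth_apply_same, Fin.update_insertNth, hwC,
          Fintype.sum_bool, Bool.not_true, Bool.not_false]
        rw [min_comm ((((C v).filter (fun p => f p a = false)).card : ℝ))]; ring
      simp_rw [hu, Finset.mul_sum]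
      rw [Finset.sum_comm]
      have hcl : ∀ v, ρ * (((C v).card : ℝ) - if (C v).Nonempty then 1 else 0) ≤ _ := fun v =>
        class_bound f μ hμ ρ (C v) (fun p hp q hq => hsep p (Finset.mem_of_mem_filter p hp) q
          (Finset.mem_of_mem_filter q hq))
      refine le_trans ?_ (Finset.sum_le_sum (fun v _ => hcl v))
      rw [← Finset.mul_sum]
      refine mul_le_mul_of_nonneg_left ?_ hρ
      rw [Finset.sum_sub_distrib]
      have e1 : ∑ v, ((C v).card : ℝ) = P.card := by
        have := Finset.card_eq_sum_card_fiberwise (s := P) (t := Finset.univ)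
          (f := fun p => (fun i => f p (y i))) (fun _ _ => Finset.mem_coe.2 (Finset.mem_univ _))
        rw [this]; push_cast; rfl
      have e2 : ∑ v, (if (C v).Nonempty then (1:ℝ) else 0) ≤ M := by
        refine le_trans ?_ (H1 y)
        rw [Finset.sum_boole]
        norm_cast
        refine Finset.card_le_card (fun v hv => ?_)
        obtain ⟨p, hp⟩ := (Finset.mem_filter.1 hv).2
        rw [Finset.mem_filter] at hp
        exact Finset.mem_image.2 ⟨p, hp.1, hp.2⟩
      rw [e1]; linarith
    calc ρ * (P.card - M) = ∑ y : Fin r → X, (∏ j, μ (y j)) * (ρ * (P.card - M)) := by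
          rw [← Finset.sum_mul, hprod1, one_mul]
      _ ≤ _ := by
          refine Finset.sum_le_sum (fun y _ => ?_)
          refine le_trans (mul_le_mul_of_nonneg_left (hy y) (Finset.prod_nonneg (fun _ _ => hμ _))) ?_
          rw [Finset.mul_sum]
          refine Finset.sum_le_sum (fun a _ => le_of_eq ?_)
          have hI : (Fin.insertNthEquiv (fun _ : Fin (r+1) => X) i) (a, y) =
            i.insertNth a y := rfl
          simp only [hI]
          rw [Fin.prod_univ_succAbove _ i]
          simp only [Fin.insertNth_apply_same, Fin.insertNth_apply_succAbove]
          ring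
  have := Finset.sum_le_sum (fun i (_ : i ∈ (Finset.univ : Finset (Fin (r+1)))) => hlow i)
  simp only [Finset.sum_const, Finset.card_univ, Fintype.card_fin, nsmul_eq_mul] at this
  push_cast at this
  refine this.trans (le_of_eq ?_)
  rw [Finset.sum_comm]
  exact Finset.sum_congr rfl (fun x _ => by rw [Finset.mul_sum])

theorem exists_vc (d K : ℝ) (hK : 1 ≤ K) : ∃ D : ℕ, 1 ≤ D ∧ ∀ τ : ℕ, (2:ℝ) ^ τ ≤ K * (τ:ℝ) ^ d → τ ≤ D := by
  have h := tendsto_pow_const_div_const_pow_of_one_lt ⌈d⌉₊ (show (1:ℝ) < 2 by norm_num)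
  have h2 := h.eventually (gt_mem_nhds (show (0:ℝ) < 1 / K by positivity))
  obtain ⟨D, hD⟩ := Filter.eventually_atTop.1 h2
  refine ⟨D + 1, by omega, fun τ hτ => ?_⟩
  by_contra hlt
  have h3 := hD τ (by omega)
  have hτ1 : (1:ℝ) ≤ τ := by exact_mod_cast (by omega : 1 ≤ τ)
  have h4 : (τ:ℝ) ^ d ≤ (τ:ℝ) ^ ⌈d⌉₊ := by
    rw [← Real.rpow_natCast]
    exact Real.rpow_le_rpow_of_exponent_le hτ1 (Nat.le_ceil d)
  rw [div_lt_div_iff₀ (by positivity) (by positivity)] at h3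
  have : K * (τ:ℝ)^d ≤ K * (τ:ℝ) ^ ⌈d⌉₊ := mul_le_mul_of_nonneg_left h4 (by positivity)
  linarith

open Classical in
theorem packing (d K : ℝ) (hd : 2 ≤ d) (hK : 1 ≤ K) : ∃ Cp : ℝ, 1 ≤ Cp ∧ ∀ (m N : ℕ)
    (Q : Matrix (Fin m) (Fin N) ℝ), (∀ i j, Q i j = 0 ∨ Q i j = 1) →
    (∀ s : ℕ, 1 ≤ s → s ≤ N → (shatterFn Q s : ℝ) ≤ K * (s : ℝ) ^ d) →
    ∀ w : Fin N → ℝ, (∀ j, 0 ≤ w j) → 0 < ∑ j, w j → ∀ ρ : ℝ, 0 < ρ → ρ ≤ 1 →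
    ∀ P : Finset (Fin N → ℝ), (∀ p ∈ P, ∃ i, p = Q i) →
    (∀ p ∈ P, ∀ q ∈ P, p ≠ q → ρ * (∑ j, w j) ≤ ∑ a, if p a ≠ q a then w a else 0) →
    (P.card : ℝ) ≤ Cp * (1 / ρ) ^ d := by
  obtain ⟨D, hD1, hD⟩ := exists_vc d K hK
  have hD1' : (1:ℝ) ≤ D := by exact_mod_cast hD1
  have h5 : (1:ℝ) ≤ (5 * D) ^ d := Real.one_le_rpow (by linarith) (by linarith)
  refine ⟨2 * K * (5 * D) ^ d, by nlinarith, ?_⟩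
  intro m N Q hQ hsh w hw hW ρ hρ hρ1 P hP hsep
  set r := ⌈4 * D / ρ⌉₊ with hr
  have hr1 : 4 * D / ρ ≤ r := Nat.le_ceil _
  have hr2 : (r:ℝ) ≤ 5 * D / ρ := by
    have := (Nat.ceil_lt_add_one (show 0 ≤ 4 * D / ρ by positivity)).le
    have h1 : 1 ≤ D / ρ := by rw [le_div_iff₀ hρ]; linarith
    calc (r:ℝ) ≤ 4 * D / ρ + 1 := this
      _ ≤ 4 * D / ρ + D / ρ := by linarith
      _ = _ := by ring
  have hrpos : 1 ≤ r := by
    have : (0:ℝ) < r := lt_of_lt_of_le (by positivity) hr1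
    exact_mod_cast this
  have hle_sh : ∀ S : Finset (Fin N), (Finset.image (fun i : Fin m => fun j : {x // x ∈ S} => Q i j)
      Finset.univ).card ≤ shatterFn Q S.card := by
    intro S
    exact Finset.le_sup (f := fun S : Finset (Fin N) => (Finset.image (fun i : Fin m => fun j : {x // x ∈ S} => Q i j)
      Finset.univ).card) (Finset.mem_filter.2 ⟨Finset.mem_univ S, rfl⟩)
  have hbound : ∀ S : Finset (Fin N), 1 ≤ S.card → ((Finset.image (fun i : Fin m => fun j : {x // x ∈ S} => Q i j)
      Finset.univ).card : ℝ) ≤ K * (S.card : ℝ) ^ d := by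
    intro S hS
    refine le_trans ?_ (hsh S.card hS (by simpa using Finset.card_le_univ S))
    exact_mod_cast hle_sh S
  have hdec : ∀ p ∈ P, ∀ q ∈ P, ∀ a, (decide (p a = 1) ≠ decide (q a = 1)) ↔ p a ≠ q a := by
    intro p hp q hq a
    obtain ⟨i, rfl⟩ := hP p hp
    obtain ⟨j, rfl⟩ := hP q hq
    rcases hQ i a with h | h <;> rcases hQ j a with h' | h' <;> simp [h, h']
  have main := packing_abs (fun (p : Fin N → ℝ) a => decide (p a = 1)) (fun a => w a / ∑ j, w j)
    (fun a => div_nonneg (hw a) hW.le) (by rw [← Finset.sum_div, div_self hW.ne']) ρ hρ.le P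
    (by
      intro p hp q hq hpq
      have := hsep p hp q hq hpq
      rw [← le_div_iff₀ hW, Finset.sum_div] at this
      refine this.trans (le_of_eq (Finset.sum_congr rfl (fun a _ => ?_)))
      have h := hdec p hp q hq a
      by_cases h' : p a ≠ q a
      · rw [if_pos h', if_pos (h.2 h')]
      · rw [if_neg h', if_neg (fun h'' => h' (h.1 h'')), zero_div])
    r (K * (r:ℝ) ^ d) D
    (by
      intro x
      set S := Finset.univ.image x with hS
      have hS1 : 1 ≤ S.card := by
        refine Finset.card_pos.2 ⟨x ⟨0, hrpos⟩, ?_⟩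
        simp [hS]
      have hS2 : S.card ≤ r := by
        simpa using (Finset.card_image_le (s := Finset.univ) (f := x))
      have hle : (P.image (fun p => fun i => decide (p (x i) = 1))).card ≤
          (Finset.image (fun i : Fin m => fun j : {x // x ∈ S} => Q i j) Finset.univ).card := by
        refine le_trans (Finset.card_le_card (t := (Finset.image (fun i : Fin m => fun j : {x // x ∈ S} => Q i j) Finset.univ).image
          (fun g => fun i => decide (g ⟨x i, by simp [hS]⟩ = 1))) ?_) Finset.card_image_le
        intro u hu
        obtain ⟨p, hp, rfl⟩ := Finset.mem_image.1 hu
        obtain ⟨i, rfl⟩ := hP p hp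
        exact Finset.mem_image.2 ⟨_, Finset.mem_image.2 ⟨i, Finset.mem_univ _, rfl⟩, rfl⟩
      calc _ ≤ ((Finset.image (fun i : Fin m => fun j : {x // x ∈ S} => Q i j) Finset.univ).card : ℝ) := by
            exact_mod_cast hle
        _ ≤ K * (S.card : ℝ) ^ d := hbound S hS1
        _ ≤ K * (r:ℝ) ^ d := by gcongr)
    (by
      intro x T hT
      rcases Nat.eq_zero_or_pos T.card with h0 | hpos
      · rw [h0]; simp
      have hinj : Set.InjOn x T := by
        intro i hi j hj hij
        by_contra hne
        obtain ⟨p, _, hp⟩ := hT (fun k => decide (k = i))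
        have h1 := hp i hi
        have h2 := hp j hj
        simp only [← hij] at h2
        rw [h1] at h2
        simp [Ne.symm hne] at h2
      set S := T.image x with hS
      have hcard : S.card = T.card := Finset.card_image_of_injOn hinj
      have h2 : 2 ^ T.card ≤ (Finset.image (fun i : Fin m => fun j : {x // x ∈ S} => Q i j) Finset.univ).card := by
        have e : 2 ^ T.card = (Finset.univ : Finset ({x // x ∈ S} → Bool)).card := by
          rw [Finset.card_univ, Fintype.card_fun, Fintype.card_bool, Fintype.card_coe, hcard]
        rw [e]
        refine Finset.card_le_card_of_injOn (fun h j => if h j then (1:ℝ) else 0) ?_ ?_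
        · intro h _
          obtain ⟨p, hpP, hp⟩ := hT (fun k => if hk : x k ∈ S then h ⟨x k, hk⟩ else false)
          obtain ⟨i, rfl⟩ := hP p hpP
          refine Finset.mem_coe.2 (Finset.mem_image.2 ⟨i, Finset.mem_univ _, ?_⟩)
          funext j
          obtain ⟨j, hj⟩ := j
          obtain ⟨k, hk, rfl⟩ := Finset.mem_image.1 hj
          have := hp k hk
          simp only [dif_pos hj] at this
          dsimp only
          rw [← this]
          rcases hQ i (x k) with h' | h' <;> simp [h']
        · intro h _ h' _ hh
          funext j
          have := congrFun hh j
          dsimp only at this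
          cases h1 : h j <;> cases h2 : h' j <;> simp [h1, h2] at this ⊢
      have h3 : (2:ℝ) ^ T.card ≤ K * (T.card : ℝ) ^ d := by
        rw [← hcard]
        refine le_trans ?_ (hbound S (by omega))
        rw [hcard]
        exact_mod_cast h2
      exact_mod_cast hD _ h3)
  have hM : K * (r:ℝ)^d ≤ K * ((5 * D) ^ d * (1/ρ)^d) := by
    rw [← Real.mul_rpow (by positivity) (by positivity)]
    refine mul_le_mul_of_nonneg_left (Real.rpow_le_rpow (by positivity) ?_ (by linarith)) (by linarith)
    rw [mul_one_div]; exact hr2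
  have h4D : 4 * D ≤ (r + 1) * ρ := by
    rw [div_le_iff₀ hρ] at hr1; linarith
  rcases le_or_gt (P.card : ℝ) (K * (r:ℝ)^d) with h | h
  · have : 0 ≤ K * ((5 * D:ℝ) ^ d * (1/ρ)^d) := by positivity
    linarith
  · have h6 : 4 * D * (P.card - K * (r:ℝ)^d) ≤ 2 * D * P.card := by
      refine le_trans ?_ main
      rw [← mul_assoc]
      exact mul_le_mul_of_nonneg_right h4D (by linarith)
    have h7 : D * (P.card - 2 * (K * (r:ℝ)^d)) ≤ D * 0 := by linarith
    have := le_of_mul_le_mul_left h7 (by linarith)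
    linarith

structure OFNode (N : ℕ) where
  v : Fin N → ℝ
  lev : ℕ
  link : Fin N → ℝ

def OFNode.root (N : ℕ) : OFNode N := ⟨0, 0, 0⟩

noncomputable def ofWt {N : ℕ} (η : ℝ) (T : List (OFNode N)) (j : Fin N) : ℝ := by
  classical exact (T.map (fun n => if n.link j ≠ 0 then 1 + η else 1)).prod

noncomputable def ofDs {N : ℕ} (w : Fin N → ℝ) (p q : Fin N → ℝ) : ℝ := by
  classical exact ∑ a, if p a ≠ q a then w a else 0

noncomputable def ofDl (N : ℕ) (i : ℕ) : ℝ := 2 * N / 2 ^ i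

def ofGood {N : ℕ} (k : ℕ) (η : ℝ) (T : List (OFNode N)) (q : Fin N → ℝ) (n : OFNode N) : Prop :=
  n.v = q ∧ ∃ i < k, n.lev = i + 1 ∧
    (∃ p ∈ T, p.lev ≤ i ∧ ofDs (ofWt η T) p.v q ≤ ofDl N i ∧ n.link = q - p.v) ∧
    ∀ p ∈ T, p.lev ≤ i + 1 → ofDl N (i + 1) < ofDs (ofWt η T) p.v q

open Classical in
noncomputable def ofStep {N : ℕ} (k : ℕ) (η : ℝ) (T : List (OFNode N)) (q : Fin N → ℝ) : List (OFNode N) :=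
  if h : ∃ n, ofGood k η T q n then T ++ [Classical.choose h] else T

noncomputable def ofRun {N : ℕ} (k : ℕ) (η : ℝ) (l : List (Fin N → ℝ)) : List (OFNode N) :=
  l.foldl (ofStep k η) [OFNode.root N]

noncomputable def ofRow {N : ℕ} (σ : ℝ) (T : List (OFNode N)) (i : ℕ) : Fin N → ℝ :=
  if h : i < N then Pi.single ⟨i, h⟩ (1 / 2) else σ • (T.getD (i - N) (OFNode.root N)).link

theorem ofWt_append {N : ℕ} (η : ℝ) (T : List (OFNode N)) (n : OFNode N) (j : Fin N) [Decidable (n.link j ≠ 0)] :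
    ofWt η (T ++ [n]) j = ofWt η T j * (if n.link j ≠ 0 then 1 + η else 1) := by
  simp only [ofWt, List.map_append, List.prod_append, List.map_cons, List.map_nil, List.prod_singleton]
  congr

theorem ofWt_one_le {N : ℕ} (η : ℝ) (hη : 0 ≤ η) (T : List (OFNode N)) (j : Fin N) : 1 ≤ ofWt η T j := by
  induction T using List.reverseRecOn with
  | nil => simp [ofWt]
  | append_singleton T n ih =>
    classical
    rw [ofWt_append]
    split_ifs <;> nlinarith

theorem ofWt_mono {N : ℕ} (η : ℝ) (hη : 0 ≤ η) (T : List (OFNode N)) (n : OFNode N) (j : Fin N) :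
    ofWt η T j ≤ ofWt η (T ++ [n]) j := by
  classical
  rw [ofWt_append]
  have := ofWt_one_le η hη T j
  split_ifs <;> nlinarith

theorem ofDs_mono {N : ℕ} (w w' : Fin N → ℝ) (h : ∀ j, w j ≤ w' j) (p q : Fin N → ℝ) :
    ofDs w p q ≤ ofDs w' p q := by
  unfold ofDs
  refine Finset.sum_le_sum (fun a _ => ?_)
  split_ifs
  · exact h a
  · exact le_rfl

theorem ofDs_self {N : ℕ} (w : Fin N → ℝ) (p : Fin N → ℝ) : ofDs w p p = 0 := by
  simp [ofDs]

theorem ofWt_sum_append {N : ℕ} (η : ℝ) (T : List (OFNode N)) (n : OFNode N) (p q : Fin N → ℝ)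
    (hl : n.link = q - p) :
    ∑ j, ofWt η (T ++ [n]) j = ∑ j, ofWt η T j + η * ofDs (ofWt η T) p q := by
  classical
  unfold ofDs
  rw [Finset.mul_sum, ← Finset.sum_add_distrib]
  refine Finset.sum_congr rfl (fun j _ => ?_)
  rw [ofWt_append]
  have : n.link j ≠ 0 ↔ p j ≠ q j := by
    rw [hl, Pi.sub_apply, sub_ne_zero, ne_comm]
  by_cases h : p j ≠ q j
  · rw [if_pos h, if_pos (this.2 h)]; ring
  · rw [if_neg h, if_neg (fun h' => h (this.1 h'))]; ring

theorem ofWt_load {N : ℕ} (η : ℝ) (hη : 0 < η) (hη1 : η ≤ 1) (T : List (OFNode N)) (j : Fin N)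
    (hT : ∀ n ∈ T, (n.link j) ^ 2 ≤ 1) :
    η * ∑ i ∈ Finset.range T.length, ((T.getD i (OFNode.root N)).link j) ^ 2 ≤ 2 * Real.log (ofWt η T j) := by
  induction T using List.reverseRecOn with
  | nil => simp [ofWt]
  | append_singleton T n ih =>
    classical
    have ih := ih (fun n' hn' => hT n' (by simp [hn']))
    have hn := hT n (by simp)
    rw [ofWt_append]
    have h1 := ofWt_one_le η hη.le T j
    rw [List.length_append, List.length_singleton, Finset.sum_range_succ]
    have e : ∑ i ∈ Finset.range T.length, (((T ++ [n]).getD i (OFNode.root N)).link j) ^ 2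
        = ∑ i ∈ Finset.range T.length, ((T.getD i (OFNode.root N)).link j) ^ 2 := by
      refine Finset.sum_congr rfl (fun i hi => ?_)
      rw [List.getD_append _ _ _ _ (Finset.mem_range.1 hi)]
    have e2 : (T ++ [n]).getD T.length (OFNode.root N) = n := by
      simp
    rw [e, e2, Real.log_mul (by linarith) (by split_ifs <;> linarith)]
    by_cases h : n.link j ≠ 0
    · rw [if_pos h]
      have h2 := Real.one_sub_inv_le_log_of_pos (show 0 < 1 + η by linarith)
      have h3 : η / 2 ≤ 1 - (1 + η)⁻¹ := by
        have : 1 - (1+η)⁻¹ = η / (1 + η) := by field_simp; ring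
        rw [this]
        exact div_le_div_of_nonneg_left hη.le (by linarith) (by linarith)
      nlinarith
    · rw [if_neg h]
      push Not at h
      rw [h, Real.log_one]
      linarith

theorem ofSum_levels {N : ℕ} (k : ℕ) (F : ℕ → ℝ) (T : List (OFNode N)) :
    (T.map (fun n => ∑ i ∈ Finset.range k, if n.lev = i + 1 then F i else 0)).sum =
      ∑ i ∈ Finset.range k, ((T.filter (fun n => n.lev = i + 1)).length : ℝ) * F i := by
  induction T with
  | nil => simp
  | cons n T ih =>
    rw [List.map_cons, List.sum_cons, ih, ← Finset.sum_add_distrib]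
    refine Finset.sum_congr rfl (fun i _ => ?_)
    by_cases h : n.lev = i + 1
    · simp [h]; ring
    · simp [h]

structure OFInv {m N : ℕ} (k : ℕ) (η : ℝ) (Q : Matrix (Fin m) (Fin N) ℝ) (T : List (OFNode N)) : Prop where
  root : OFNode.root N ∈ T
  lev_le : ∀ n ∈ T, n.lev ≤ k
  rows : ∀ n ∈ T, 1 ≤ n.lev → ∃ i, n.v = Q i
  vals : ∀ n ∈ T, ∀ j, n.v j = 0 ∨ n.v j = 1
  link : ∀ n ∈ T, ∀ j, (n.link j) ^ 2 ≤ 1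
  rep : ∀ n ∈ T, ∃ c : ℕ → ℝ, (∀ j, ∑ i ∈ Finset.range T.length,
      c i * (T.getD i (OFNode.root N)).link j = n.v j) ∧
      ∑ i ∈ Finset.range T.length, (c i) ^ 2 ≤ n.lev
  sep : T.Pairwise (fun a b => a.lev = b.lev → 1 ≤ a.lev → ofDl N a.lev < ofDs (ofWt η T) a.v b.v)
  wb : ∑ j, ofWt η T j ≤ N + η * (T.map (fun n => ∑ i ∈ Finset.range k,
      if n.lev = i + 1 then ofDl N i else 0)).sum
  w2 : ∑ j, ofWt η T j ≤ 2 * N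

theorem OFInv.init {m N : ℕ} (k : ℕ) (η : ℝ) (Q : Matrix (Fin m) (Fin N) ℝ) :
    OFInv k η Q [OFNode.root N] := by
  have hw : ∀ j, ofWt η [OFNode.root N] j = 1 := by intro j; simp [ofWt, OFNode.root]
  constructor
  · simp
  · simp [OFNode.root]
  · simp [OFNode.root]
  · simp [OFNode.root]
  · simp [OFNode.root]
  · intro n hn
    rw [List.mem_singleton] at hn
    subst hn
    exact ⟨0, by simp [OFNode.root], by simp [OFNode.root]⟩
  · simp
  · simp only [hw]
    simp [OFNode.root]
  · simp only [hw, Finset.sum_const, Finset.card_univ, Fintype.card_fin, nsmul_eq_mul, mul_one]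
    have : (0:ℝ) ≤ N := Nat.cast_nonneg N
    linarith

theorem ofCount {m N : ℕ} (k : ℕ) (Q : Matrix (Fin m) (Fin N) ℝ)
    (nb : ℕ → ℝ)
    (HP : ∀ w : Fin N → ℝ, (∀ j, 1 ≤ w j) → ∑ j, w j ≤ 2 * N → ∀ i < k, ∀ P : Finset (Fin N → ℝ),
      (∀ p ∈ P, ∃ i, p = Q i) → (∀ p ∈ P, ∀ q ∈ P, p ≠ q → ofDl N (i+1) < ofDs w p q) →
      (P.card : ℝ) ≤ nb i)
    (w : Fin N → ℝ) (hw : ∀ j, 1 ≤ w j) (hw2 : ∑ j, w j ≤ 2 * N) (T : List (OFNode N))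
    (rows : ∀ n ∈ T, 1 ≤ n.lev → ∃ i, n.v = Q i)
    (sep : T.Pairwise (fun a b => a.lev = b.lev → 1 ≤ a.lev → ofDl N a.lev < ofDs w a.v b.v))
    (i : ℕ) (hi : i < k) : ((T.filter (fun n => n.lev = i + 1)).length : ℝ) ≤ nb i := by
  classical
  set F := T.filter (fun n => n.lev = i + 1) with hF
  have hmem : ∀ n ∈ F, n ∈ T ∧ n.lev = i + 1 := by
    intro n hn; simpa [hF] using hn
  have hp : (F.map OFNode.v).Pairwise (fun a b => ofDl N (i+1) < ofDs w a b) := by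
    rw [List.pairwise_map]
    refine (sep.filter _).imp_of_mem ?_
    intro a b ha hb h
    have h1 := (hmem a ha).2
    have h2 := (hmem b hb).2
    have := h (h1.trans h2.symm) (by omega)
    rwa [h1] at this
  have h0 : (0:ℝ) ≤ ofDl N (i+1) := by unfold ofDl; positivity
  have hnd : (F.map OFNode.v).Nodup := by
    refine hp.imp ?_
    rintro a b h rfl
    rw [ofDs_self] at h
    linarith
  have hsymm : ∀ p q, ofDs w p q = ofDs w q p := by
    intro p q
    unfold ofDs
    simp only [ne_comm]
  have hc := HP w hw hw2 i hi (F.map OFNode.v).toFinset (by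
    intro p hp
    simp only [List.mem_toFinset, List.mem_map] at hp
    obtain ⟨n, hn, rfl⟩ := hp
    exact rows n (hmem n hn).1 (by rw [(hmem n hn).2]; omega)) (by
    intro p hp' q hq' hne
    rw [List.mem_toFinset] at hp' hq'
    have hs : Std.Symm (fun a b => ofDl N (i+1) < ofDs w a b) :=
      ⟨fun a b h => by rw [hsymm]; exact h⟩
    exact hp.forall hp' hq' hne)
  rwa [List.toFinset_card_of_nodup hnd, List.length_map] at hc

theorem ofInv_step {m N : ℕ} (k : ℕ) (η : ℝ) (hη : 0 < η) (Q : Matrix (Fin m) (Fin N) ℝ)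
    (hQ : ∀ i j, Q i j = 0 ∨ Q i j = 1) (nb : ℕ → ℝ)
    (HP : ∀ w : Fin N → ℝ, (∀ j, 1 ≤ w j) → ∑ j, w j ≤ 2 * N → ∀ i < k, ∀ P : Finset (Fin N → ℝ),
      (∀ p ∈ P, ∃ i, p = Q i) → (∀ p ∈ P, ∀ q ∈ P, p ≠ q → ofDl N (i+1) < ofDs w p q) →
      (P.card : ℝ) ≤ nb i)
    (Hη : η * ∑ i ∈ Finset.range k, nb i * ofDl N i ≤ N)
    (T : List (OFNode N)) (hT : OFInv k η Q T) (i0 : Fin m) :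
    OFInv k η Q (ofStep k η T (Q i0)) ∧
      ∃ p ∈ ofStep k η T (Q i0), ofDs (fun _ => 1) p.v (Q i0) ≤ ofDl N k := by
  classical
  set q := Q i0 with hq
  have hw1 := ofWt_one_le η hη.le T
  unfold ofStep
  split_ifs with h
  · have hg := Classical.choose_spec h
    set n := Classical.choose h with hn
    obtain ⟨hnv, i, hik, hlev, ⟨p, hpT, hpl, hpd, hlink⟩, hfar⟩ := hg
    have hrows : ∀ a ∈ T ++ [n], 1 ≤ a.lev → ∃ i, a.v = Q i := by
      intro a ha ha1
      rw [List.mem_append, List.mem_singleton] at ha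
      rcases ha with ha | rfl
      · exact hT.rows a ha ha1
      · exact ⟨i0, hnv⟩
    have hsep0 : (T ++ [n]).Pairwise (fun a b => a.lev = b.lev → 1 ≤ a.lev →
        ofDl N a.lev < ofDs (ofWt η T) a.v b.v) := by
      rw [List.pairwise_append]
      refine ⟨hT.sep, by simp, ?_⟩
      intro a ha b hb hab _
      rw [List.mem_singleton] at hb
      subst hb
      rw [hnv, hab, hlev]
      exact hfar a ha (by omega)
    have hwb : ∑ j, ofWt η (T ++ [n]) j ≤ N + η * ((T ++ [n]).map (fun n => ∑ i ∈ Finset.range k,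
        if n.lev = i + 1 then ofDl N i else 0)).sum := by
      rw [ofWt_sum_append η T n p.v q hlink, List.map_append, List.sum_append]
      have e : (([n]).map (fun n => ∑ i ∈ Finset.range k,
        if n.lev = i + 1 then ofDl N i else 0)).sum = ofDl N i := by
        simp only [List.map_cons, List.map_nil, List.sum_singleton, hlev]
        rw [Finset.sum_eq_single i]
        · simp
        · intro b _ hb; rw [if_neg (by omega)]
        · intro hb; exact absurd (Finset.mem_range.2 hik) hb
      rw [e]
      have := hT.wb
      have := mul_le_mul_of_nonneg_left hpd hη.le
      linarith
    refine ⟨⟨?_, ?_, hrows, ?_, ?_, ?_, ?_, hwb, ?_⟩, n, by simp, ?_⟩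
    · simp [hT.root]
    · intro a ha
      rw [List.mem_append, List.mem_singleton] at ha
      rcases ha with ha | rfl
      · exact hT.lev_le a ha
      · omega
    · intro a ha
      rw [List.mem_append, List.mem_singleton] at ha
      rcases ha with ha | rfl
      · exact hT.vals a ha
      · intro j; rw [hnv]; exact hQ i0 j
    · intro a ha j
      rw [List.mem_append, List.mem_singleton] at ha
      rcases ha with ha | rfl
      · exact hT.link a ha j
      · rw [hlink, Pi.sub_apply]
        rcases hT.vals p hpT j with h1 | h1 <;> rcases hQ i0 j with h2 | h2 <;>
          rw [h1, hq, h2] <;> norm_num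
    · have ext : ∀ (a : OFNode N) (z : ℝ), a ∈ T → ∃ c : ℕ → ℝ, (∀ j, ∑ i ∈ Finset.range (T ++ [n]).length,
          c i * ((T ++ [n]).getD i (OFNode.root N)).link j = a.v j + z * n.link j) ∧
          ∑ i ∈ Finset.range (T ++ [n]).length, (c i) ^ 2 ≤ a.lev + z ^ 2 := by
        intro a z ha
        obtain ⟨c, hc1, hc2⟩ := hT.rep a ha
        refine ⟨fun i => if i < T.length then c i else z, ?_, ?_⟩
        · intro j
          rw [List.length_append, List.length_singleton, Finset.sum_range_succ, ← hc1 j]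
          congr 1
          · refine Finset.sum_congr rfl (fun i hi => ?_)
            dsimp only
            rw [List.getD_append _ _ _ _ (Finset.mem_range.1 hi), if_pos (Finset.mem_range.1 hi)]
          · simp
        · rw [List.length_append, List.length_singleton, Finset.sum_range_succ]
          refine add_le_add (le_trans (le_of_eq ?_) hc2) (by simp)
          refine Finset.sum_congr rfl (fun i hi => ?_)
          dsimp only
          rw [if_pos (Finset.mem_range.1 hi)]
      intro a ha
      rw [List.mem_append, List.mem_singleton] at ha
      rcases ha with ha | rfl
      · simpa using ext a 0 ha
      · obtain ⟨c, hc1, hc2⟩ := ext p 1 hpT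
        refine ⟨c, fun j => ?_, ?_⟩
        · rw [hc1 j, hlink, hnv, Pi.sub_apply]; ring
        · rw [hlev]
          have : (p.lev : ℝ) ≤ i := by exact_mod_cast hpl
          push_cast
          linarith
    · refine hsep0.imp ?_
      intro a b h h1 h2
      exact (h h1 h2).trans_le (ofDs_mono _ _ (fun j => ofWt_mono η hη.le T n j) _ _)
    · refine hwb.trans ?_
      rw [ofSum_levels]
      have hcnt := ofCount k Q nb HP (ofWt η T) hw1 hT.w2 (T ++ [n]) hrows hsep0
      have : ∑ i ∈ Finset.range k, (((T ++ [n]).filter (fun n => n.lev = i + 1)).length : ℝ) * ofDl N i ≤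
          ∑ i ∈ Finset.range k, nb i * ofDl N i :=
        Finset.sum_le_sum (fun i hi => mul_le_mul_of_nonneg_right (hcnt i (Finset.mem_range.1 hi))
          (by unfold ofDl; positivity))
      have := mul_le_mul_of_nonneg_left this hη.le
      linarith
    · rw [hnv, ofDs_self]; unfold ofDl; positivity
  · refine ⟨hT, ?_⟩
    have near : ∀ i ≤ k, ∃ p ∈ T, p.lev ≤ i ∧ ofDs (ofWt η T) p.v q ≤ ofDl N i := by
      intro i
      induction i with
      | zero =>
        intro _
        refine ⟨_, hT.root, le_rfl, ?_⟩
        refine le_trans ?_ (hT.w2.trans (by simp [ofDl]))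
        unfold ofDs
        refine Finset.sum_le_sum (fun a _ => ?_)
        have := hw1 a
        split_ifs <;> linarith
      | succ i ih =>
        intro hi
        obtain ⟨p, hp, hpl, hpd⟩ := ih (by omega)
        by_contra hcon
        push Not at hcon
        exact h ⟨⟨q, i+1, q - p.v⟩, rfl, i, by omega, rfl, ⟨p, hp, hpl, hpd, rfl⟩, hcon⟩
    obtain ⟨p, hp, _, hpd⟩ := near k le_rfl
    exact ⟨p, hp, (ofDs_mono _ _ hw1 _ _).trans hpd⟩

theorem ofRun_append {N : ℕ} (k : ℕ) (η : ℝ) (l : List (Fin N → ℝ)) (q : Fin N → ℝ) :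
    ofRun k η (l ++ [q]) = ofStep k η (ofRun k η l) q := by
  simp [ofRun]

theorem ofStep_prefix {N : ℕ} (k : ℕ) (η : ℝ) (T : List (OFNode N)) (q : Fin N → ℝ) :
    ∃ S, ofStep k η T q = T ++ S := by
  unfold ofStep
  split_ifs with h
  · exact ⟨_, rfl⟩
  · exact ⟨[], by simp⟩

theorem ofRow_sum {N : ℕ} (σ : ℝ) (T : List (OFNode N)) (G : ℕ → (Fin N → ℝ) → ℝ) :
    ∑ i ∈ Finset.range (N + T.length), G i (ofRow σ T i) =
      ∑ j : Fin N, G j (Pi.single j (1/2)) +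
      ∑ i ∈ Finset.range T.length, G (N + i) (σ • (T.getD i (OFNode.root N)).link) := by
  rw [Finset.sum_range_add]
  congr 1
  · rw [Finset.sum_range]
    refine Finset.sum_congr rfl (fun j _ => ?_)
    simp [ofRow]
  · refine Finset.sum_congr rfl (fun i _ => ?_)
    simp [ofRow]

theorem ofCore (N k : ℕ) (hN : 1 ≤ N) (η L : ℝ) (hη : 0 < η) (hη1 : η ≤ 1) (hL : 0 < L)
    (hLN : Real.log (2 * N) ≤ L) :
    ∃ (kk : List (Fin N → ℝ) → ℕ) (row : List (Fin N → ℝ) → ℕ → (Fin N → ℝ))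
      (ℓ : List (Fin N → ℝ) → ℕ → ℝ),
      (∀ l q, kk l ≤ kk (l ++ [q]) ∧ ∀ i < kk l, row (l ++ [q]) i = row l i) ∧
      (∀ (m : ℕ) (Q : Matrix (Fin m) (Fin N) ℝ),
        (∀ i j, Q i j = 0 ∨ Q i j = 1) → ∀ nb : ℕ → ℝ,
        (∀ w : Fin N → ℝ, (∀ j, 1 ≤ w j) → ∑ j, w j ≤ 2 * N → ∀ i < k, ∀ P : Finset (Fin N → ℝ),
          (∀ p ∈ P, ∃ i, p = Q i) → (∀ p ∈ P, ∀ q ∈ P, p ≠ q → ofDl N (i+1) < ofDs w p q) →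
          (P.card : ℝ) ≤ nb i) →
        η * ∑ i ∈ Finset.range k, nb i * ofDl N i ≤ N →
        ∀ (t : ℕ) (ht : t ≤ m), 1 ≤ t →
        ∀ pl : List (Fin N → ℝ), pl = List.ofFn (fun i : Fin t => Q (Fin.castLE ht i)) →
          ∀ hlt : t - 1 < m,
          (∀ j, ∑ i ∈ Finset.range (kk pl), ℓ pl i * row pl i j = Q ⟨t - 1, hlt⟩ j) ∧
          (∀ j, Real.sqrt (∑ i ∈ Finset.range (kk pl), (row pl i j) ^ 2) ≤ 1) ∧
          ∑ i ∈ Finset.range (kk pl), (ℓ pl i) ^ 2 ≤ 4 * L * k / η + 4 * ofDl N k) := by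
  classical
  set σ : ℝ := Real.sqrt (η / (4 * L)) with hσ
  have hσpos : 0 < σ := Real.sqrt_pos.2 (by positivity)
  have hσ2 : σ ^ 2 = η / (4 * L) := Real.sq_sqrt (by positivity)
  have hell : ∀ l : List (Fin N → ℝ), ∃ c : ℕ → ℝ, (∃ c : ℕ → ℝ,
      (∀ j, ∑ i ∈ Finset.range (N + (ofRun k η l).length),
        c i * ofRow σ (ofRun k η l) i j = l.getLastD 0 j) ∧
        ∑ i ∈ Finset.range (N + (ofRun k η l).length), (c i) ^ 2 ≤ 4 * L * k / η + 4 * ofDl N k) →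
      (∀ j, ∑ i ∈ Finset.range (N + (ofRun k η l).length),
        c i * ofRow σ (ofRun k η l) i j = l.getLastD 0 j) ∧
        ∑ i ∈ Finset.range (N + (ofRun k η l).length), (c i) ^ 2 ≤ 4 * L * k / η + 4 * ofDl N k := by
    intro l
    by_cases h : ∃ c : ℕ → ℝ, (∀ j, ∑ i ∈ Finset.range (N + (ofRun k η l).length),
        c i * ofRow σ (ofRun k η l) i j = l.getLastD 0 j) ∧
        ∑ i ∈ Finset.range (N + (ofRun k η l).length), (c i) ^ 2 ≤ 4 * L * k / η + 4 * ofDl N k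
    · obtain ⟨c, hc⟩ := h
      exact ⟨c, fun _ => hc⟩
    · exact ⟨0, fun h' => absurd h' h⟩
  choose ell hell using hell
  refine ⟨fun l => N + (ofRun k η l).length, fun l => ofRow σ (ofRun k η l), ell, ?_, ?_⟩
  · intro l q
    dsimp only
    rw [ofRun_append]
    obtain ⟨S, hS⟩ := ofStep_prefix k η (ofRun k η l) q
    rw [hS]
    refine ⟨by simp, fun i hi => ?_⟩
    unfold ofRow
    split_ifs with h
    · rfl
    · rw [List.getD_append _ _ _ _ (by omega)]
  · intro m Q hQ nb HP Hη
    have hInv : ∀ (t : ℕ) (ht : t ≤ m), OFInv k η Q (ofRun k η (List.ofFn (fun i : Fin t => Q (Fin.castLE ht i)))) := by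
      intro t
      induction t with
      | zero => intro ht; simpa [ofRun] using OFInv.init k η Q
      | succ t ih =>
        intro ht
        rw [List.ofFn_succ', List.concat_eq_append, ofRun_append]
        exact (ofInv_step k η hη Q hQ nb HP Hη _ (ih (by omega)) _).1
    intro t ht ht1 pl hpl hlt
    obtain ⟨t, rfl⟩ : ∃ t', t = t' + 1 := ⟨t - 1, by omega⟩
    have hI : OFInv k η Q (ofRun k η pl) := by rw [hpl]; exact hInv _ ht
    have hlast : pl = (List.ofFn (fun i : Fin t => Q (Fin.castLE (by omega : t ≤ m) i))) ++ [Q ⟨t, hlt⟩] := by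
      rw [hpl, List.ofFn_succ', List.concat_eq_append]
      rfl
    have hnear : ∃ p ∈ ofRun k η pl, ofDs (fun _ => 1) p.v (Q ⟨t, hlt⟩) ≤ ofDl N k := by
      rw [hlast, ofRun_append]
      exact (ofInv_step k η hη Q hQ nb HP Hη _ (hInv t (by omega)) _).2
    have hgl : pl.getLastD 0 = Q ⟨t, hlt⟩ := by rw [hlast]; simp
    clear hlast hpl
    set T := ofRun k η pl with hT
    have hex : ∃ c : ℕ → ℝ, (∀ j, ∑ i ∈ Finset.range (N + T.length),
        c i * ofRow σ T i j = pl.getLastD 0 j) ∧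
        ∑ i ∈ Finset.range (N + T.length), (c i) ^ 2 ≤ 4 * L * k / η + 4 * ofDl N k := by
      obtain ⟨p, hp, hpd⟩ := hnear
      obtain ⟨c, hc1, hc2⟩ := hI.rep p hp
      set q := Q ⟨t, hlt⟩ with hq
      let c' : ℕ → ℝ := fun i => if h : i < N then 2 * (q ⟨i, h⟩ - p.v ⟨i, h⟩) else c (i - N) / σ
      have c1 : ∀ j : Fin N, c' j = 2 * (q j - p.v j) := by intro j; simp [c']
      have c2 : ∀ i, c' (N + i) = c i / σ := by intro i; simp [c']
      refine ⟨c', ?_, ?_⟩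
      · intro j
        rw [hgl, ofRow_sum σ T (fun i v => c' i * v j)]
        simp only [c1, c2, Pi.smul_apply, smul_eq_mul]
        rw [Finset.sum_eq_single j]
        · have : ∑ i ∈ Finset.range T.length, c i / σ * (σ * (T.getD i (OFNode.root N)).link j) = p.v j := by
            rw [← hc1 j]
            refine Finset.sum_congr rfl (fun i _ => ?_)
            field_simp
          rw [this, Pi.single_eq_same]; ring
        · intro b _ hb
          rw [Pi.single_eq_of_ne hb.symm, mul_zero]
        · simp
      · rw [ofRow_sum σ T (fun i _ => (c' i) ^ 2)]
        simp only [c1, c2, div_pow, ← Finset.sum_div, hσ2]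
        have hlev : (p.lev : ℝ) ≤ k := by exact_mod_cast hI.lev_le p hp
        have a1 : (∑ i ∈ Finset.range T.length, (c i) ^ 2) / (η / (4 * L)) ≤ 4 * L * k / η := by
          rw [div_div_eq_mul_div]
          refine div_le_div_of_nonneg_right ?_ hη.le
          nlinarith
        have a2 : ∑ j : Fin N, (2 * (q j - p.v j)) ^ 2 ≤ 4 * ofDl N k := by
          refine le_trans ?_ (mul_le_mul_of_nonneg_left hpd (by norm_num))
          unfold ofDs
          rw [Finset.mul_sum]
          refine Finset.sum_le_sum (fun j _ => ?_)
          rcases hI.vals p hp j with h1 | h1 <;> rcases hQ ⟨t, hlt⟩ j with h2 | h2 <;>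
            rw [h1, hq, h2] <;> norm_num
        linarith
    have hsp := hell pl hex
    refine ⟨?_, ?_, hsp.2⟩
    · intro j
      have := hsp.1 j
      rw [hgl] at this
      exact this
    · intro j
      rw [Real.sqrt_le_one, ofRow_sum σ T (fun _ v => (v j) ^ 2)]
      have b1 : ∑ j' : Fin N, ((Pi.single j' (1/2) : Fin N → ℝ) j) ^ 2 = 1 / 4 := by
        rw [Finset.sum_eq_single j]
        · rw [Pi.single_eq_same]; norm_num
        · intro b _ hb
          rw [Pi.single_eq_of_ne hb.symm]; norm_num
        · simp
      rw [b1]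
      simp only [Pi.smul_apply, smul_eq_mul, mul_pow, ← Finset.mul_sum, hσ2]
      have hload := ofWt_load η hη hη1 T j (fun n hn => hI.link n hn j)
      have hle : ofWt η T j ≤ 2 * N := (Finset.single_le_sum (f := fun j => ofWt η T j)
        (fun j _ => by linarith [ofWt_one_le η hη.le T j]) (Finset.mem_univ j)).trans hI.w2
      have h1 := ofWt_one_le η hη.le T j
      have hlog : Real.log (ofWt η T j) ≤ L := (Real.log_le_log (by linarith) hle).trans hLN
      rw [div_mul_eq_mul_div]
      have : η * ∑ i ∈ Finset.range T.length, ((T.getD i (OFNode.root N)).link j) ^ 2 / 1 ≤ 2 * L := by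
        simp only [div_one]; linarith
      have : (η * ∑ i ∈ Finset.range T.length, ((T.getD i (OFNode.root N)).link j) ^ 2) / (4 * L) ≤ 1 / 2 := by
        rw [div_le_iff₀ (by positivity)]
        linarith
      linarith

theorem ofHP {d K Cp : ℝ} {m N : ℕ} (hN : 1 ≤ N) (Q : Matrix (Fin m) (Fin N) ℝ)
    (hpack : ∀ w : Fin N → ℝ, (∀ j, 0 ≤ w j) → 0 < ∑ j, w j → ∀ ρ : ℝ, 0 < ρ → ρ ≤ 1 →
      ∀ P : Finset (Fin N → ℝ), (∀ p ∈ P, ∃ i, p = Q i) →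
      (∀ p ∈ P, ∀ q ∈ P, p ≠ q → ρ * (∑ j, w j) ≤ ofDs w p q) →
      (P.card : ℝ) ≤ Cp * (1 / ρ) ^ d) (k : ℕ) :
    ∀ w : Fin N → ℝ, (∀ j, 1 ≤ w j) → ∑ j, w j ≤ 2 * N → ∀ i < k, ∀ P : Finset (Fin N → ℝ),
      (∀ p ∈ P, ∃ i, p = Q i) → (∀ p ∈ P, ∀ q ∈ P, p ≠ q → ofDl N (i+1) < ofDs w p q) →
      (P.card : ℝ) ≤ min (Cp * ((2:ℝ) ^ (i+1)) ^ d) m := by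
  classical
  intro w hw hw2 i _ P hP hsep
  refine le_min ?_ ?_
  · have h1 : (0:ℝ) < 1 / 2 ^ (i+1) := by positivity
    have h2 : (1:ℝ) / 2 ^ (i+1) ≤ 1 := by
      rw [div_le_one (by positivity)]
      exact one_le_pow₀ (by norm_num)
    have := hpack w (fun j => by linarith [hw j]) ?_ _ h1 h2 P hP ?_
    · rwa [one_div_one_div] at this
    · exact Finset.sum_pos (fun j _ => by linarith [hw j]) ⟨⟨0, hN⟩, Finset.mem_univ _⟩
    · intro p hp q hq hne
      refine le_trans ?_ (hsep p hp q hq hne).le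
      unfold ofDl
      rw [div_mul_eq_mul_div, one_mul]
      gcongr
  · have : P ⊆ Finset.univ.image (fun i => Q i) := by
      intro p hp
      obtain ⟨i, rfl⟩ := hP p hp
      exact Finset.mem_image_of_mem _ (Finset.mem_univ i)
    have := (Finset.card_le_card this).trans Finset.card_image_le
    simp only [Finset.card_univ, Fintype.card_fin] at this
    exact_mod_cast this

theorem ofParamN (d Cp L : ℝ) (hd : 2 ≤ d) (hC : 1 ≤ Cp) (N : ℕ) (hN : 1 ≤ N) (hL : 1 ≤ L)
    (hLk : ∀ k : ℕ, (2:ℝ) ^ k ≤ 4 * N → (k:ℝ) ≤ L) :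
    ∃ (k : ℕ) (η : ℝ), 0 < η ∧ η ≤ 1 ∧
      (∀ m : ℕ, η * ∑ i ∈ Finset.range k, (min (Cp * ((2:ℝ) ^ (i+1)) ^ d) m) * ofDl N i ≤ N) ∧
      4 * L * k / η + 4 * ofDl N k ≤
        (48 * Cp * ((N : ℝ) ^ (((1 : ℝ) - 1 / d) / 2) * L ^ ((1 : ℝ) / d))) ^ 2 := by
  have hN' : (1:ℝ) ≤ N := by exact_mod_cast hN
  set y : ℝ := (N / L ^ 2) ^ (1 / d) with hy
  have hypos : 0 < y := by positivity
  set k : ℕ := ⌊Real.logb 2 y⌋₊ with hk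
  set A : ℝ := ((2:ℝ) ^ k) ^ (d - 1) with hA
  have h2k : (1:ℝ) ≤ 2 ^ k := one_le_pow₀ (by norm_num)
  have hA1 : 1 ≤ A := Real.one_le_rpow h2k (by linarith)
  set X : ℝ := (N:ℝ) / y with hX
  have hXeq : ((N : ℝ) ^ (((1 : ℝ) - 1 / d) / 2) * L ^ ((1 : ℝ) / d)) ^ 2 = X := by
    rw [mul_pow, ← Real.rpow_natCast, ← Real.rpow_natCast, ← Real.rpow_mul (by positivity),
      ← Real.rpow_mul (by positivity), hX, hy, Real.div_rpow (by positivity) (by positivity)]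
    have e1 : ((1 : ℝ) - 1 / d) / 2 * ((2:ℕ):ℝ) = 1 - 1 / d := by push_cast; ring
    rw [e1, Real.rpow_sub (by positivity), Real.rpow_one]
    have e2 : L ^ (1 / d * ((2:ℕ):ℝ)) = (L ^ 2) ^ (1 / d) := by
      rw [mul_comm, Real.rpow_mul (by positivity), Real.rpow_natCast]
    rw [e2]
    field_simp
  have hyd : y ^ d = N / L ^ 2 := by
    rw [hy, ← Real.rpow_mul (by positivity), one_div_mul_cancel (by linarith), Real.rpow_one]
  have hXpos : 0 < X := by positivity
  refine ⟨k, 1 / (8 * Cp * A), by positivity, ?_, ?_, ?_⟩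
  · rw [div_le_one (by positivity)]; nlinarith
  · intro m
    have hterm : ∀ i ∈ Finset.range k, (min (Cp * ((2:ℝ) ^ (i+1)) ^ d) m) * ofDl N i ≤
        (8 * Cp * N * A / 2 ^ k) * 2 ^ i := by
      intro i hi
      have hik := Finset.mem_range.1 hi
      have hle : (2:ℝ) ^ (i+1) ≤ 2 ^ k := pow_le_pow_right₀ (by norm_num) hik
      have g1 : ((2:ℝ) ^ (i+1)) ^ (d - 2) ≤ ((2:ℝ) ^ k) ^ (d - 2) :=
        Real.rpow_le_rpow (by positivity) hle (by linarith)
      have g2 : ((2:ℝ) ^ (i+1)) ^ d = ((2:ℝ) ^ (i+1)) ^ (d - 2) * ((2:ℝ) ^ (i+1)) ^ 2 := by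
        rw [← Real.rpow_natCast (((2:ℝ) ^ (i+1))) 2, ← Real.rpow_add (by positivity)]
        congr 1; push_cast; ring
      have g3 : A = ((2:ℝ) ^ k) ^ (d - 2) * 2 ^ k := by
        rw [hA]
        nth_rewrite 3 [← Real.rpow_one ((2:ℝ) ^ k)]
        rw [← Real.rpow_add (by positivity)]
        congr 1; ring
      have hdl : 0 ≤ ofDl N i := by unfold ofDl; positivity
      refine (mul_le_mul_of_nonneg_right (min_le_left _ _) hdl).trans ?_
      rw [g2, g3]
      have e1 : (8 * Cp * N * (((2:ℝ) ^ k) ^ (d - 2) * 2 ^ k) / 2 ^ k) * 2 ^ i =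
        (8 * Cp * N * 2 ^ i) * ((2:ℝ) ^ k) ^ (d - 2) := by field_simp
      have e2 : Cp * (((2:ℝ) ^ (i+1)) ^ (d - 2) * ((2:ℝ) ^ (i+1)) ^ 2) * ofDl N i =
        (8 * Cp * N * 2 ^ i) * ((2:ℝ) ^ (i+1)) ^ (d - 2) := by
        unfold ofDl
        generalize ((2:ℝ) ^ (i+1)) ^ (d - 2) = z
        rw [pow_succ]; field_simp; ring
      rw [e1, e2]
      exact mul_le_mul_of_nonneg_left g1 (by positivity)
    have hs := Finset.sum_le_sum hterm
    rw [← Finset.mul_sum] at hs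
    have hgeo : ∑ i ∈ Finset.range k, (2:ℝ) ^ i ≤ 2 ^ k := by
      rw [geom_sum_eq (by norm_num)]; norm_num
    have hs2 := hs.trans (mul_le_mul_of_nonneg_left hgeo (by positivity))
    have hs3 : 8 * Cp * N * A / 2 ^ k * 2 ^ k = 8 * Cp * A * N := by field_simp
    rw [hs3] at hs2
    rw [div_mul_eq_mul_div, one_mul, div_le_iff₀ (by positivity)]
    linarith
  · rw [mul_pow, hXeq]
    have t1 : ofDl N k ≤ 4 * X := by
      unfold ofDl
      rw [hX, div_le_iff₀ (by positivity), mul_div_assoc', div_mul_eq_mul_div, le_div_iff₀ hypos]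
      have : y ≤ 2 * 2 ^ k := by
        have h1 := (Nat.lt_floor_add_one (Real.logb 2 y)).le
        rw [← hk] at h1
        have h2 := (Real.logb_le_iff_le_rpow (by norm_num : (1:ℝ) < 2) hypos).1 h1
        have e : (2:ℝ) ^ ((k:ℝ) + 1) = 2 * 2 ^ k := by
          rw [Real.rpow_add (by norm_num), Real.rpow_natCast, Real.rpow_one, mul_comm]
        rwa [e] at h2
      nlinarith
    have t2 : L * k * A ≤ X := by
      rcases Nat.eq_zero_or_pos k with h0 | hpos
      · rw [h0]; simp; exact hXpos.le
      · have hky : (2:ℝ) ^ k ≤ y := by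
          have h1 : (k:ℝ) ≤ Real.logb 2 y := by
            have : 1 ≤ Real.logb 2 y := (Nat.floor_pos).1 hpos
            exact Nat.floor_le (by linarith)
          rw [Real.le_logb_iff_rpow_le (by norm_num) hypos, Real.rpow_natCast] at h1
          exact h1
        have hyN : y ≤ N := by
          have hy1 : 1 ≤ y := h2k.trans hky
          calc y = y ^ (1:ℝ) := (Real.rpow_one y).symm
            _ ≤ y ^ d := Real.rpow_le_rpow_of_exponent_le hy1 (by linarith)
            _ = N / L ^ 2 := hyd
            _ ≤ N := div_le_self (by positivity) (one_le_pow₀ hL)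
        have hkL : (k:ℝ) ≤ L := hLk k (by linarith)
        have hAy : A ≤ y ^ (d - 1) := Real.rpow_le_rpow (by positivity) hky (by linarith)
        have hXy : L * L * y ^ (d - 1) = X := by
          rw [Real.rpow_sub hypos, hyd, Real.rpow_one, hX]
          field_simp
        rw [← hXy]
        gcongr
    have e : 4 * L * k / (1 / (8 * Cp * A)) = 32 * Cp * (L * k * A) := by
      field_simp; ring
    rw [e]
    have t3 := mul_le_mul_of_nonneg_left t2 (show 0 ≤ 32 * Cp by positivity)
    have t4 : 32 * Cp * X + 16 * X ≤ (48 * Cp) ^ 2 * X := by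
      rw [← add_mul]
      exact mul_le_mul_of_nonneg_right (by nlinarith) hXpos.le
    linarith

theorem ofParamM (d Cp L : ℝ) (hd : 2 ≤ d) (hC : 1 ≤ Cp) (N : ℕ) (hN : 1 ≤ N) (hL : 1 ≤ L)
    (hLk : ∀ k : ℕ, (2:ℝ) ^ k ≤ 4 * N → (k:ℝ) ≤ L) (m : ℕ) (hm : 1 ≤ m) :
    ∃ (k : ℕ) (η : ℝ), 0 < η ∧ η ≤ 1 ∧
      (η * ∑ i ∈ Finset.range k, (min (Cp * ((2:ℝ) ^ (i+1)) ^ d) m) * ofDl N i ≤ N) ∧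
      4 * L * k / η + 4 * ofDl N k ≤
        (48 * Cp * ((m : ℝ) ^ (((1 : ℝ) - 1 / d) / 2) * L ^ 3)) ^ 2 := by
  have hN' : (1:ℝ) ≤ N := by exact_mod_cast hN
  have hm' : (1:ℝ) ≤ m := by exact_mod_cast hm
  have hd1 : 1 / d ≤ 1 := by rw [div_le_one (by linarith)]; linarith
  set k : ℕ := Nat.log 2 N + 1 with hk
  set Y : ℝ := (m:ℝ) ^ (1 - 1 / d) with hY
  have hY1 : 1 ≤ Y := Real.one_le_rpow hm' (by linarith)
  have hYeq : ((m : ℝ) ^ (((1 : ℝ) - 1 / d) / 2)) ^ 2 = Y := by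
    rw [← Real.rpow_natCast, ← Real.rpow_mul (by positivity), hY]
    congr 1; push_cast; ring
  have hk1 : (N:ℝ) ≤ 2 ^ k := by
    exact_mod_cast (Nat.lt_pow_succ_log_self (by norm_num) N).le
  have hk2 : (k:ℝ) ≤ L := by
    apply hLk
    have : (2:ℝ) ^ (Nat.log 2 N) ≤ N := by exact_mod_cast Nat.pow_log_le_self 2 (by omega)
    rw [hk, pow_succ]; linarith
  refine ⟨k, 1 / (4 * Cp * L * Y), by positivity, ?_, ?_, ?_⟩
  · rw [div_le_one (by positivity)]
    have h1 : 1 ≤ Cp * L := by nlinarith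
    have h2 : 1 ≤ Cp * L * Y := by nlinarith
    linarith
  · have hterm : ∀ i ∈ Finset.range k, (min (Cp * ((2:ℝ) ^ (i+1)) ^ d) m) * ofDl N i ≤
        4 * Cp * Y * N := by
      intro i _
      set a := Cp * ((2:ℝ) ^ (i+1)) ^ d with ha
      have hapos : 0 < a := by positivity
      have hmin : 0 < min a (m:ℝ) := lt_min hapos (by linarith)
      have h1 : min a (m:ℝ) ≤ Cp * 2 ^ (i+1) * Y := by
        calc min a (m:ℝ) = (min a (m:ℝ)) ^ (1/d) * (min a (m:ℝ)) ^ (1 - 1/d) := by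
              rw [← Real.rpow_add hmin]; simp
          _ ≤ a ^ (1/d) * (m:ℝ) ^ (1 - 1/d) := by
              refine mul_le_mul ?_ ?_ (by positivity) (by positivity)
              · exact Real.rpow_le_rpow hmin.le (min_le_left _ _) (by positivity)
              · exact Real.rpow_le_rpow hmin.le (min_le_right _ _) (by linarith)
          _ ≤ Cp * 2 ^ (i+1) * Y := by
              refine mul_le_mul_of_nonneg_right ?_ (by positivity)
              rw [ha, Real.mul_rpow (by positivity) (by positivity), ← Real.rpow_mul (by positivity),
                mul_one_div_cancel (by linarith), Real.rpow_one]
              refine mul_le_mul_of_nonneg_right ?_ (by positivity)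
              calc Cp ^ (1/d) ≤ Cp ^ (1:ℝ) := Real.rpow_le_rpow_of_exponent_le hC hd1
                _ = Cp := Real.rpow_one _
      have hdl : 0 ≤ ofDl N i := by unfold ofDl; positivity
      refine (mul_le_mul_of_nonneg_right h1 hdl).trans (le_of_eq ?_)
      unfold ofDl
      rw [pow_succ]; field_simp; ring
    have hs := Finset.sum_le_sum hterm
    rw [Finset.sum_const, Finset.card_range, nsmul_eq_mul] at hs
    rw [div_mul_eq_mul_div, one_mul, div_le_iff₀ (by positivity)]
    refine hs.trans ?_
    have := mul_le_mul_of_nonneg_right hk2 (show 0 ≤ 4 * Cp * Y * N by positivity)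
    linarith
  · rw [mul_pow (48 * Cp), mul_pow ((m : ℝ) ^ (((1 : ℝ) - 1 / d) / 2)), hYeq]
    have t1 : ofDl N k ≤ 2 := by
      unfold ofDl
      rw [div_le_iff₀ (by positivity)]; linarith
    have e : 4 * L * k / (1 / (4 * Cp * L * Y)) = 16 * Cp * Y * (L ^ 2 * k) := by
      field_simp; ring
    rw [e]
    have t2 : L ^ 2 * k ≤ L ^ 3 := by
      rw [pow_succ L 2]; exact mul_le_mul_of_nonneg_left hk2 (by positivity)
    have hL3 : 1 ≤ L ^ 3 := one_le_pow₀ hL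
    have t3 : 16 * Cp * Y * (L ^ 2 * k) ≤ 16 * Cp * Y * (L ^ 3) ^ 2 :=
      mul_le_mul_of_nonneg_left (t2.trans (by nlinarith)) (by positivity)
    have hone : 1 ≤ Y * (L ^ 3) ^ 2 := by
      have : 1 ≤ (L ^ 3) ^ 2 := one_le_pow₀ hL3
      nlinarith
    have t4 : 16 * Cp * (Y * (L ^ 3) ^ 2) + 8 * (Y * (L ^ 3) ^ 2) ≤ (48 * Cp) ^ 2 * (Y * (L ^ 3) ^ 2) := by
      rw [← add_mul]
      exact mul_le_mul_of_nonneg_right (by nlinarith) (by positivity)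
    linarith


/-- An online factorization algorithm in the row arrival model is encoded by functions
of the sequence of rows received so far: `k l` is the number of rows of the current
matrix `R`, `row l i` is its `i`-th row, and `ℓ l` is the current row vector (one
coordinate per row of `R`). -/
theorem stmt19 (d K : ℝ) (hd : 2 ≤ d) (hK : 1 ≤ K) :
    ∃ C : ℝ, 0 < C ∧ ∀ m N : ℕ, 2 ≤ N →
    ∃ (k : List (Fin N → ℝ) → ℕ) (row : List (Fin N → ℝ) → ℕ → (Fin N → ℝ))
      (ℓ : List (Fin N → ℝ) → ℕ → ℝ),
      -- online structure: `R_t` extends `R_{t-1}` by appending rows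
      (∀ l q, k l ≤ k (l ++ [q]) ∧ ∀ i < k l, row (l ++ [q]) i = row l i) ∧
      -- the guarantee, for 0/1 matrices with bounded shatter function
      (∀ Q : Matrix (Fin m) (Fin N) ℝ,
        (∀ i j, Q i j = 0 ∨ Q i j = 1) →
        (∀ s : ℕ, 1 ≤ s → s ≤ N → (shatterFn Q s : ℝ) ≤ K * (s : ℝ) ^ d) →
        ∀ (t : ℕ) (ht : t ≤ m), 1 ≤ t →
        ∀ pl : List (Fin N → ℝ), pl = List.ofFn (fun i : Fin t => Q (Fin.castLE ht i)) →
          ∀ hlt : t - 1 < m,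
          -- `ℓ_t R_t = q_t`
          (∀ j, ∑ i ∈ Finset.range (k pl), ℓ pl i * row pl i j = Q ⟨t - 1, hlt⟩ j) ∧
          -- `‖R_t‖_{1→2} ≤ 1`
          (∀ j, Real.sqrt (∑ i ∈ Finset.range (k pl), (row pl i j) ^ 2) ≤ 1) ∧
          -- `‖ℓ_t‖₂ ≤ C·min(m^{(1−1/d)/2}(log₂ 4N)³, N^{(1−1/d)/2}(log₂ 4N)^{1/d})`
          Real.sqrt (∑ i ∈ Finset.range (k pl), (ℓ pl i) ^ 2) ≤
            C * min ((m : ℝ) ^ (((1 : ℝ) - 1 / d) / 2) * (Real.logb 2 (4 * N)) ^ 3)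
                    ((N : ℝ) ^ (((1 : ℝ) - 1 / d) / 2) *
                      (Real.logb 2 (4 * N)) ^ ((1 : ℝ) / d))) := by
  obtain ⟨Cp, hCp, hpack⟩ := packing d K hd hK
  refine ⟨48 * Cp, by positivity, ?_⟩
  intro m N hN
  have hN1 : 1 ≤ N := by omega
  have hN' : (1:ℝ) ≤ N := by exact_mod_cast hN1
  set L : ℝ := Real.logb 2 (4 * N) with hLdef
  have hL : 1 ≤ L := by
    rw [hLdef, Real.le_logb_iff_rpow_le (by norm_num) (by positivity), Real.rpow_one]
    linarith
  have hLk : ∀ k : ℕ, (2:ℝ) ^ k ≤ 4 * N → (k:ℝ) ≤ L := by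
    intro k h
    rw [hLdef, Real.le_logb_iff_rpow_le (by norm_num) (by positivity), Real.rpow_natCast]
    exact h
  have hLN : Real.log (2 * N) ≤ L := by
    have h1 : Real.log (2 * N) ≤ Real.log (4 * N) := Real.log_le_log (by positivity) (by linarith)
    have h2 : Real.log (4 * N) ≤ L := by
      rw [hLdef, Real.logb]
      refine le_div_self (Real.log_nonneg (by linarith)) (Real.log_pos (by norm_num)) ?_
      have := Real.log_two_lt_d9
      linarith
    exact h1.trans h2
  rcases Nat.eq_zero_or_pos m with h0 | hm
  · refine ⟨fun _ => 0, fun _ _ => 0, fun _ _ => 0, by simp, ?_⟩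
    intro Q _ _ t ht ht1
    omega
  have main : ∃ (k : ℕ) (η : ℝ), 0 < η ∧ η ≤ 1 ∧
      (η * ∑ i ∈ Finset.range k, (min (Cp * ((2:ℝ) ^ (i+1)) ^ d) m) * ofDl N i ≤ N) ∧
      4 * L * k / η + 4 * ofDl N k ≤
        (48 * Cp * min ((m : ℝ) ^ (((1 : ℝ) - 1 / d) / 2) * L ^ 3)
          ((N : ℝ) ^ (((1 : ℝ) - 1 / d) / 2) * L ^ ((1 : ℝ) / d))) ^ 2 := by
    rcases min_choice ((m : ℝ) ^ (((1 : ℝ) - 1 / d) / 2) * L ^ 3)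
          ((N : ℝ) ^ (((1 : ℝ) - 1 / d) / 2) * L ^ ((1 : ℝ) / d)) with h | h
    · rw [h]
      exact ofParamM d Cp L hd hCp N hN1 hL hLk m hm
    · rw [h]
      obtain ⟨k, η, h1, h2, h3, h4⟩ := ofParamN d Cp L hd hCp N hN1 hL hLk
      exact ⟨k, η, h1, h2, h3 m, h4⟩
  obtain ⟨k, η, hη, hη1, hsum, hB⟩ := main
  obtain ⟨kk, row, ℓ, hon, hcore⟩ := ofCore N k hN1 η L hη hη1 (by linarith) hLN
  refine ⟨kk, row, ℓ, hon, ?_⟩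
  intro Q hQ hsh t ht ht1 pl hpl hlt
  have hHP := ofHP (K := K) (d := d) (Cp := Cp) hN1 Q (by
    intro w hw hW ρ hρ hρ1 P hP hsep
    exact hpack m N Q hQ hsh w hw hW ρ hρ hρ1 P hP hsep) k
  obtain ⟨c1, c2, c3⟩ := hcore m Q hQ _ hHP hsum t ht ht1 pl hpl hlt
  refine ⟨c1, c2, ?_⟩
  refine Real.sqrt_le_iff.2 ⟨by positivity, c3.trans hB⟩
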